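/- Let G=(V,E) be a finite directed graph with m = |E| ≥ 1 edges, costs c ∈ ℝ^E, demand d ∈ ℝ^V, threshold F ∈ ℝ, and parameters α > 0 and κ > 0 with 2κ < α. Let y ∈ ℝ^V satisfy s := c − By > 0 entrywise and r := F − ⟨d, y⟩ > 0. Suppose x ∈ ℝ^E satisfies Bᵀx = g(y) and |x(e)| ≤ 2κ·s(e)^{−1−α} for all e ∈ E. Define f := (r/(100m))·(α·s^{−1−α} − x) ∈ ℝ^E. Then: (i) Bᵀf = d; (ii) f ≥ 0 entrywise; (iii) ⟨c, f⟩ ≤ ⟨d, y⟩ + (r/(100m))·(α + 2κ)·Σ_{e∈E} s(e)^{−α}. In particular, if ⟨d, y⟩ ≤ F*, then ⟨c, f⟩ ≤ F* + (r/(100m))·(α + 2κ)·Σ_{e∈E} s(e)^{−α}. -/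

import Mathlib

/-!
Why the extraction works. Write `k = r / (100 m)`, so that `f = k (α s^{-1-α} - x)`.

The incidence operator `Bᵀ` is linear, and the prescribed gradient `g(y)` is `-d / k` plus
`α Bᵀ s^{-1-α}`; hence `Bᵀ f = k (α Bᵀ s^{-1-α} - g(y)) = d`. The bound on `|x|` pins `f` between
`k (α - 2κ) s^{-1-α} ≥ 0` and `k (α + 2κ) s^{-1-α}`. Finally `c = s + B y`, so
`⟨c, f⟩ = ⟨s, f⟩ + ⟨y, Bᵀ f⟩ = ⟨s, f⟩ + ⟨d, y⟩` by adjointness (`sum_incidence_mul`), and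
`s · s^{-1-α} = s^{-α}` bounds the first term.
-/

open Finset Real

noncomputable section

variable {V E : Type*} [Fintype V] [Fintype E] [DecidableEq V]

/-- The slack `s(y)(e) = c e - (B y)(e)` where `(B y)(e) = y (tail e) - y (head e)`. -/
def dualSlack (tail head : E → V) (c : E → ℝ) (y : V → ℝ) (e : E) : ℝ :=
  c e - (y (tail e) - y (head e))

/-- The vertex gradient `g(y) = (-100 m / (F - ⟨d,y⟩)) d + α Bᵀ s(y)^{-1-α}`,
where `(Bᵀ x)(v) = ∑_{tail e = v} x e - ∑_{head e = v} x e`. -/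
def dualGrad (tail head : E → V) (c : E → ℝ) (d : V → ℝ) (F α : ℝ) (y : V → ℝ) (v : V) : ℝ :=
  (-100 * (Fintype.card E : ℝ) / (F - ∑ w, d w * y w)) * d v
    + α * ((∑ e, if tail e = v then dualSlack tail head c y e ^ (-1 - α) else 0)
         - (∑ e, if head e = v then dualSlack tail head c y e ^ (-1 - α) else 0))

/-- The extracted flow `f = (r/(100 m)) (α s^{-1-α} - x)` with `r = F - ⟨d,y⟩`. -/
def extractedFlow (tail head : E → V) (c : E → ℝ) (d : V → ℝ) (F α : ℝ)
    (y : V → ℝ) (x : E → ℝ) (e : E) : ℝ :=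
  ((F - ∑ v, d v * y v) / (100 * (Fintype.card E : ℝ))) *
    (α * dualSlack tail head c y e ^ (-1 - α) - x e)

/-- Adjointness of the incidence operators: `⟨Bᵀ f, y⟩ = ⟨f, B y⟩`. -/
theorem sum_incidence_mul {V E : Type*} [Fintype V] [Fintype E] [DecidableEq V]
    (tail head : E → V) (f : E → ℝ) (y : V → ℝ) :
    ∑ v, ((∑ e, if tail e = v then f e else 0) - ∑ e, if head e = v then f e else 0) * y v
      = ∑ e, f e * (y (tail e) - y (head e)) := by
  have push : ∀ p : E → V,
      ∑ v, (∑ e, if p e = v then f e else 0) * y v = ∑ e, f e * y (p e) := by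
    intro p
    simp only [Finset.sum_mul]
    rw [Finset.sum_comm]
    simp [ite_mul]
  simp only [sub_mul, mul_sub, Finset.sum_sub_distrib, push]

/-- Linearity of a one-sided incidence sum, for the combination `k (α S - x)` defining the
extracted flow. -/
theorem sum_ite_scaled_sub {V E : Type*} [Fintype E] [DecidableEq V]
    (p : E → V) (k α : ℝ) (S x : E → ℝ) (v : V) :
    (∑ e, if p e = v then k * (α * S e - x e) else 0)
      = k * (α * (∑ e, if p e = v then S e else 0) - ∑ e, if p e = v then x e else 0) := by
  simp only [Finset.mul_sum, ← Finset.sum_sub_distrib]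
  refine Finset.sum_congr rfl fun e _ => ?_
  split_ifs <;> ring

/-- **Extracting a primal flow from the dual.**
With `m = |E| ≥ 1`, `α > 0`, `0 < κ` and `2κ < α`, a feasible `y` (slacks `s > 0`,
residual `r = F - ⟨d,y⟩ > 0`) and `x` with `Bᵀ x = g(y)` and `|x e| ≤ 2κ s(e)^{-1-α}`,
the flow `f = (r/(100 m)) (α s^{-1-α} - x)` satisfies: (i) `Bᵀ f = d`; (ii) `f ≥ 0`;
(iii) `⟨c, f⟩ ≤ ⟨d,y⟩ + (r/(100 m)) (α + 2κ) ∑_e s(e)^{-α}`; and in particular, if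
`⟨d,y⟩ ≤ F*` then `⟨c, f⟩ ≤ F* + (r/(100 m)) (α + 2κ) ∑_e s(e)^{-α}`. -/
theorem extract_flow
    (tail head : E → V) (c : E → ℝ) (d : V → ℝ) (F α κ : ℝ)
    (hm : 1 ≤ Fintype.card E) (hα : 0 < α) (hκ : 0 < κ) (hκα : 2 * κ < α)
    (y : V → ℝ)
    (hs : ∀ e, 0 < dualSlack tail head c y e)
    (hr : 0 < F - ∑ v, d v * y v)
    (x : E → ℝ)
    (hx1 : ∀ v : V, ((∑ e, if tail e = v then x e else 0) - ∑ e, if head e = v then x e else 0)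
      = dualGrad tail head c d F α y v)
    (hx2 : ∀ e, |x e| ≤ 2 * κ * dualSlack tail head c y e ^ (-1 - α)) :
    (∀ v : V, ((∑ e, if tail e = v then extractedFlow tail head c d F α y x e else 0)
        - ∑ e, if head e = v then extractedFlow tail head c d F α y x e else 0) = d v) ∧
    (∀ e, 0 ≤ extractedFlow tail head c d F α y x e) ∧
    (∑ e, c e * extractedFlow tail head c d F α y x e
      ≤ (∑ v, d v * y v) + ((F - ∑ v, d v * y v) / (100 * (Fintype.card E : ℝ)))
          * (α + 2 * κ) * ∑ e, dualSlack tail head c y e ^ (-α)) ∧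
    (∀ Fstar : ℝ, ∑ v, d v * y v ≤ Fstar →
      ∑ e, c e * extractedFlow tail head c d F α y x e
        ≤ Fstar + ((F - ∑ v, d v * y v) / (100 * (Fintype.card E : ℝ)))
            * (α + 2 * κ) * ∑ e, dualSlack tail head c y e ^ (-α)) := by
  have hm' : (0 : ℝ) < Fintype.card E := by exact_mod_cast hm
  have hk : 0 < (F - ∑ v, d v * y v) / (100 * (Fintype.card E : ℝ)) := by positivity
  have hdem : ∀ v : V, ((∑ e, if tail e = v then extractedFlow tail head c d F α y x e else 0)
      - ∑ e, if head e = v then extractedFlow tail head c d F α y x e else 0) = d v := by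
    intro v
    have hg := hx1 v
    simp only [dualGrad] at hg
    simp only [extractedFlow, sum_ite_scaled_sub]
    -- Eliminate the tail part of `Bᵀ x`; the coefficient of `d` in `g(y)` is `-1 / k`.
    rw [sub_eq_iff_eq_add] at hg
    rw [hg]
    field_simp
    ring
  have hnonneg : ∀ e, 0 ≤ extractedFlow tail head c d F α y x e := by
    intro e
    have hS : 0 < dualSlack tail head c y e ^ (-1 - α) := Real.rpow_pos_of_pos (hs e) _
    have hx := (abs_le.mp (hx2 e)).2
    have hgap := mul_le_mul_of_nonneg_right hκα.le hS.le
    exact mul_nonneg hk.le (by linarith)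
  have hslack : ∀ e, dualSlack tail head c y e * extractedFlow tail head c d F α y x e
      ≤ (F - ∑ v, d v * y v) / (100 * (Fintype.card E : ℝ)) * (α + 2 * κ)
          * dualSlack tail head c y e ^ (-α) := by
    intro e
    have hpow : dualSlack tail head c y e ^ (-α)
        = dualSlack tail head c y e * dualSlack tail head c y e ^ (-1 - α) := by
      rw [← Real.rpow_one_add' (hs e).le (by linarith)]
      congr 1
      ring
    have hx := (abs_le.mp (hx2 e)).1
    have hflow : α * dualSlack tail head c y e ^ (-1 - α) - x e
        ≤ (α + 2 * κ) * dualSlack tail head c y e ^ (-1 - α) := by linarith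
    have hmul := mul_le_mul_of_nonneg_left hflow (mul_pos (hs e) hk).le
    rw [hpow, extractedFlow]
    linarith
  have hcost : ∑ e, c e * extractedFlow tail head c d F α y x e
      ≤ (∑ v, d v * y v) + ((F - ∑ v, d v * y v) / (100 * (Fintype.card E : ℝ)))
          * (α + 2 * κ) * ∑ e, dualSlack tail head c y e ^ (-α) := by
    have hadj := sum_incidence_mul tail head (extractedFlow tail head c d F α y x) y
    simp only [hdem] at hadj
    -- `⟨c, f⟩ = ⟨d, y⟩ + ⟨s, f⟩`, since `c = B y + s` and `Bᵀ f = d`.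
    have hsplit : ∑ e, c e * extractedFlow tail head c d F α y x e
        = (∑ v, d v * y v)
          + ∑ e, dualSlack tail head c y e * extractedFlow tail head c d F α y x e := by
      rw [hadj, ← Finset.sum_add_distrib]
      refine Finset.sum_congr rfl fun e _ => ?_
      simp only [dualSlack]
      ring
    rw [hsplit, Finset.mul_sum]
    exact add_le_add le_rfl (Finset.sum_le_sum fun e _ => hslack e)
  exact ⟨hdem, hnonneg, hcost, fun Fstar hF => hcost.trans (by gcongr)⟩

end
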